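/- Fix a natural number p ≥ 4, real numbers β₁, β₂, β₃ and complex numbers α₁, …, α₆ with |α₄| ≥ |α₅|. Then there exist constants α, β ∈ [0, ∞) such that for every n ∈ ℤ₊ and every x ∈ h_n: 2 Re⟨N^p x, N^p P_n G x⟩ + Σ_{k=1}^{6} ‖N^p P_n L_k x‖² ≤ α (‖N^p x‖² + ‖x‖²) + β. -/

import Mathlib

noncomputable section

namespace QOsc

/-- The annihilation operator `a` in coordinates: `a e_j = √j e_{j-1}`. -/
def ann (f : ℕ → ℂ) : ℕ → ℂ := fun j => (Real.sqrt (j + 1) : ℂ) * f (j + 1)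

/-- The creation operator `a†` in coordinates: `a† e_j = √(j+1) e_{j+1}`. -/
def cre (f : ℕ → ℂ) : ℕ → ℂ := fun j => if j = 0 then 0 else (Real.sqrt j : ℂ) * f (j - 1)

/-- The number operator `N = a† a`. -/
def num (f : ℕ → ℂ) : ℕ → ℂ := fun j => (j : ℂ) * f j

/-- The power `N^p` of the number operator. -/
def numPow (p : ℕ) (f : ℕ → ℂ) : ℕ → ℂ := fun j => (j : ℂ) ^ p * f j

/-- The orthogonal projection `P_n` onto the span `h_n` of `e_0, …, e_n`. -/
def proj (n : ℕ) (f : ℕ → ℂ) : ℕ → ℂ := fun j => if j ≤ n then f j else 0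

/-- The inner product `⟨f, g⟩ = Σ_j conj (f_j) g_j` (linear in the second variable). -/
def innerSeq (f g : ℕ → ℂ) : ℂ := ∑' j : ℕ, (starRingEnd ℂ) (f j) * g j

/-- The squared norm `‖f‖² = Σ_j |f_j|²`. -/
def normSq (f : ℕ → ℂ) : ℝ := ∑' j : ℕ, ‖f j‖ ^ 2

/-- The Hamiltonian `H = iβ₁(a† − a) + β₂ N + β₃ (a†)² a²`. -/
def Ham (b1 b2 b3 : ℝ) (f : ℕ → ℂ) : ℕ → ℂ :=
  (Complex.I * (b1 : ℂ)) • (cre f - ann f) + (b2 : ℂ) • num f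
    + (b3 : ℂ) • cre (cre (ann (ann f)))

/-- The effective Hamiltonian
`G = −iH − ½(|α₁|² a† a + |α₂|² a a† + |α₃|² N² + |α₄|² (a†)² a² + |α₅|² a² (a†)² + |α₆|² N⁴)`. -/
def Gop (b1 b2 b3 : ℝ) (a1 a2 a3 a4 a5 a6 : ℂ) (f : ℕ → ℂ) : ℕ → ℂ :=
  (-Complex.I) • Ham b1 b2 b3 f
    - (1 / 2 : ℂ) •
      (((‖a1‖ ^ 2 : ℝ) : ℂ) • cre (ann f) + ((‖a2‖ ^ 2 : ℝ) : ℂ) • ann (cre f)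
        + ((‖a3‖ ^ 2 : ℝ) : ℂ) • num (num f)
        + ((‖a4‖ ^ 2 : ℝ) : ℂ) • cre (cre (ann (ann f)))
        + ((‖a5‖ ^ 2 : ℝ) : ℂ) • ann (ann (cre (cre f)))
        + ((‖a6‖ ^ 2 : ℝ) : ℂ) • num (num (num (num f))))

/-!
With `w j = j ^ (2 p)` the left-hand side is the generator of the quantum master equation applied to
`w(N)` and evaluated in the state `x`; it splits into a contribution of the drive
`i β₁ (a† - a)` and one dissipator per jump operator, while the part of `H` commuting with `N` drops
out. On finitely supported vectors each dissipator becomes a finite difference of `w`: photon loss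
contributes a nonpositive term, the gain terms are only decreased by the truncation `Pₙ`, and jumps
that are functions of `N` contribute nothing. The drive and the one-photon gain involve
`(j + 1) (w (j + 1) - w j) = O(w j + 1)`. Two-photon gain alone has order `j ^ (2 p + 1)`, but since
`|α₅| ≤ |α₄|` it may be combined with an equal amount of two-photon loss, and the sum is a second
difference, again `O(w j + 1)`.
-/

section PolynomialDifference

open Polynomial

lemma natDegree_mul_taylor_sub_le {R : Type*} [Ring R] (A P : R[X]) (r : R) :
    (A * (taylor r P - P)).natDegree ≤ A.natDegree + P.natDegree - 1 := by
  by_cases hP : P.natDegree = 0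
  · rw [eq_C_of_natDegree_eq_zero hP, taylor_C, sub_self, mul_zero, natDegree_zero]
    exact Nat.zero_le _
  have hdeg : (taylor r P - P).natDegree ≤ P.natDegree :=
    (natDegree_sub_le _ _).trans_eq (by rw [natDegree_taylor, max_self])
  have hlead : (taylor r P - P).coeff P.natDegree = 0 := by
    rw [coeff_sub, coeff_taylor_natDegree, coeff_natDegree, sub_self]
  have hpred : (taylor r P - P).natDegree ≤ P.natDegree - 1 := natDegree_le_pred hdeg hlead
  have hmul : (A * (taylor r P - P)).natDegree ≤ A.natDegree + (taylor r P - P).natDegree :=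
    natDegree_mul_le
  lia

lemma exists_eval_le_mul_pow_add_one (P : ℝ[X]) {m : ℕ} (hP : P.natDegree ≤ m) :
    ∃ K : ℝ, ∀ t : ℝ, 0 ≤ t → P.eval t ≤ K * (t ^ m + 1) := by
  refine ⟨∑ i ∈ Finset.range (m + 1), |P.coeff i|, fun t ht => ?_⟩
  rw [eval_eq_sum_range' (Nat.lt_succ_of_le hP), Finset.sum_mul]
  refine Finset.sum_le_sum fun i hi => ?_
  have hpow : t ^ i ≤ t ^ m + 1 := by
    rcases le_total t 1 with h | h
    · linarith [pow_le_one₀ ht h (n := i), pow_nonneg ht m]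
    · linarith [pow_le_pow_right₀ h (Finset.mem_range_succ_iff.mp hi)]
  exact mul_le_mul (le_abs_self _) hpow (pow_nonneg ht i) (abs_nonneg _)

end PolynomialDifference

/-- Weights `w` for which `w(N)` is a Lyapunov function of the oscillator: the one-photon gain
and the net effect of two-photon gain and loss at equal rates are at most `K (w + 1)`. The value
of `w (j - 2)` at `j = 0, 1` is irrelevant because of the factor `j (j - 1)`. -/
structure IsLyapunovWeight (K : ℝ) (w : ℕ → ℝ) : Prop where
  nonneg : ∀ j, 0 ≤ w j
  mono : Monotone w
  one_photon : ∀ j, (j + 1) * (w (j + 1) - w j) ≤ K * (w j + 1)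
  two_photon : ∀ j, j * (j - 1) * (w (j - 2) - w j) + (j + 1) * (j + 2) * (w (j + 2) - w j)
    ≤ K * (w j + 1)

section PowerWeight

open Polynomial

lemma exists_one_photon_pow_le (m : ℕ) :
    ∃ K : ℝ, ∀ t : ℝ, 0 ≤ t → (t + 1) * ((t + 1) ^ m - t ^ m) ≤ K * (t ^ m + 1) := by
  have hdeg : ((X + C 1) * (taylor 1 (X ^ m) - X ^ m) : ℝ[X]).natDegree ≤ m := by
    have h := natDegree_mul_taylor_sub_le (X + C 1) (X ^ m) (1 : ℝ)
    rw [natDegree_X_add_C, natDegree_X_pow] at h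
    lia
  obtain ⟨K, hK⟩ := exists_eval_le_mul_pow_add_one _ hdeg
  exact ⟨K, fun t ht => by simpa [taylor_eval] using hK t ht⟩

lemma exists_two_photon_pow_le (m : ℕ) :
    ∃ K : ℝ, ∀ t : ℝ, 0 ≤ t →
      t * (t - 1) * ((t - 2) ^ m - t ^ m) + (t + 1) * (t + 2) * ((t + 2) ^ m - t ^ m)
        ≤ K * (t ^ m + 1) := by
  -- The left-hand side is `F t - F (t - 2)` with `F t = (t + 1) (t + 2) ((t + 2) ^ m - t ^ m)`,
  -- and each of the two differences lowers the degree by one.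
  set F : ℝ[X] := (X + C 1) * (X + C 2) * (taylor 2 (X ^ m) - X ^ m) with hF
  have hFdeg : F.natDegree ≤ m + 1 := by
    have h := natDegree_mul_taylor_sub_le ((X + C 1) * (X + C 2)) (X ^ m) (2 : ℝ)
    have hquad : ((X + C 1) * (X + C 2) : ℝ[X]).natDegree ≤ 1 + 1 :=
      natDegree_mul_le_of_le (natDegree_X_add_C 1).le (natDegree_X_add_C 2).le
    rw [natDegree_X_pow] at h
    lia
  have hdeg : (C (-1) * (taylor (-2) F - F)).natDegree ≤ m := by
    have h := natDegree_mul_taylor_sub_le (C (-1)) F (-2)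
    rw [natDegree_C] at h
    lia
  obtain ⟨K, hK⟩ := exists_eval_le_mul_pow_add_one _ hdeg
  refine ⟨K, fun t ht => (le_of_eq ?_).trans (hK t ht)⟩
  simp only [hF, eval_mul, eval_add, eval_sub, eval_pow, eval_X, eval_C, taylor_eval]
  ring

lemma exists_isLyapunovWeight_pow (m : ℕ) :
    ∃ K : ℝ, IsLyapunovWeight K fun j => (j : ℝ) ^ m := by
  obtain ⟨K₁, h₁⟩ := exists_one_photon_pow_le m
  obtain ⟨K₂, h₂⟩ := exists_two_photon_pow_le m
  have hpos (j : ℕ) : 0 ≤ (j : ℝ) ^ m + 1 := by positivity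
  refine ⟨max K₁ K₂, fun j => by positivity, fun i j hij => by gcongr, fun j => ?_, fun j => ?_⟩
  · have h := (h₁ j j.cast_nonneg).trans (mul_le_mul_of_nonneg_right (le_max_left K₁ K₂) (hpos j))
    simpa only [Nat.cast_add, Nat.cast_one] using h
  · have h := (h₂ j j.cast_nonneg).trans (mul_le_mul_of_nonneg_right (le_max_right K₁ K₂) (hpos j))
    rcases j with _ | _ | j
    · simpa using h
    · norm_num at h ⊢
      exact h
    · have hcast : ((j + 1 + 1 : ℕ) : ℝ) - 2 = j := by push_cast; ring
      rw [hcast] at h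
      simpa using h

end PowerWeight

section Ladder

variable (f : ℕ → ℂ) (j : ℕ)

@[simp]
lemma cre_zero : cre f 0 = 0 := if_pos rfl

lemma cre_succ : cre f (j + 1) = (Real.sqrt (j + 1) : ℂ) * f j := by
  simp [cre]

lemma norm_ann_sq : ‖ann f j‖ ^ 2 = (j + 1) * ‖f (j + 1)‖ ^ 2 := by
  rw [ann, norm_mul, mul_pow, Complex.norm_real, Real.norm_eq_abs, sq_abs,
    Real.sq_sqrt (by positivity)]

lemma norm_cre_succ_sq : ‖cre f (j + 1)‖ ^ 2 = (j + 1) * ‖f j‖ ^ 2 := by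
  rw [cre_succ, norm_mul, mul_pow, Complex.norm_real, Real.norm_eq_abs, sq_abs,
    Real.sq_sqrt (by positivity)]

lemma ofReal_sqrt_mul_self {t : ℝ} (ht : 0 ≤ t) : (Real.sqrt t : ℂ) * Real.sqrt t = t := by
  rw [← Complex.ofReal_mul, Real.mul_self_sqrt ht]

lemma ann_cre : ann (cre f) j = ((j + 1 : ℝ) : ℂ) * f j := by
  rw [ann, cre_succ, ← mul_assoc, ofReal_sqrt_mul_self (by positivity)]

lemma cre_ann : cre (ann f) j = (j : ℝ) * f j := by
  cases j with
  | zero => simp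
  | succ j =>
    rw [cre_succ, ann, ← mul_assoc, ofReal_sqrt_mul_self (by positivity), Nat.cast_succ]

lemma ann_ann_cre_cre :
    ann (ann (cre (cre f))) j = (((j + 1) * (j + 2) : ℝ) : ℂ) * f j := by
  calc ann (ann (cre (cre f))) j = ((j + 2 : ℝ) : ℂ) * ann (cre f) j := by
        rw [ann, ann_cre, ann]; push_cast; ring
    _ = (((j + 1) * (j + 2) : ℝ) : ℂ) * f j := by rw [ann_cre]; push_cast; ring

lemma cre_cre_ann_ann :
    cre (cre (ann (ann f))) j = ((j * (j - 1) : ℝ) : ℂ) * f j := by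
  calc cre (cre (ann (ann f))) j = ((j - 1 : ℝ) : ℂ) * cre (ann f) j := by
        cases j with
        | zero => simp
        | succ j => rw [cre_succ, cre_ann, cre_succ]; push_cast; ring
    _ = ((j * (j - 1) : ℝ) : ℂ) * f j := by rw [cre_ann]; push_cast; ring

end Ladder

section Truncated

open scoped ComplexConjugate
open Finset

variable {n : ℕ} {w : ℕ → ℝ} {x : ℕ → ℂ} {K : ℝ}

/-- The quadratic form `⟨f, w(N) Pₙ f⟩` of the truncated diagonal operator `w(N) Pₙ`. -/
def weightedNormSq (n : ℕ) (w : ℕ → ℝ) (f : ℕ → ℂ) : ℝ :=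
  ∑ j ∈ range (n + 1), w j * ‖f j‖ ^ 2

/-- The real bilinear form `Re ⟨f, w(N) Pₙ g⟩`, the polarization of `weightedNormSq`. -/
def weightedInner (n : ℕ) (w : ℕ → ℝ) (f g : ℕ → ℂ) : ℝ :=
  ∑ j ∈ range (n + 1), w j * (conj (f j) * g j).re

/-- The expectation in the state `x` of the dissipator `L† B L - ½ (L† L B + B L† L)` of a jump
operator `L` at the observable `B = w(N) Pₙ`; the argument `L'` stands for the adjoint `L†`. -/
def dissipation (n : ℕ) (w : ℕ → ℝ) (L L' : (ℕ → ℂ) → ℕ → ℂ) (x : ℕ → ℂ) : ℝ :=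
  weightedNormSq n w (L x) - weightedInner n w x (L' (L x))

lemma weightedNormSq_mono {v : ℕ → ℝ} (h : ∀ j, v j ≤ w j) (f : ℕ → ℂ) :
    weightedNormSq n v f ≤ weightedNormSq n w f :=
  sum_le_sum fun j _ => mul_le_mul_of_nonneg_right (h j) (sq_nonneg _)

lemma weightedNormSq_add (v w : ℕ → ℝ) (f : ℕ → ℂ) :
    weightedNormSq n (fun j => v j + w j) f = weightedNormSq n v f + weightedNormSq n w f := by
  simp only [weightedNormSq, add_mul, sum_add_distrib]

lemma weightedNormSq_sub (v w : ℕ → ℝ) (f : ℕ → ℂ) :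
    weightedNormSq n (fun j => v j - w j) f = weightedNormSq n v f - weightedNormSq n w f := by
  simp only [weightedNormSq, sub_mul, sum_sub_distrib]

lemma weightedNormSq_const_mul (c : ℝ) (w : ℕ → ℝ) (f : ℕ → ℂ) :
    weightedNormSq n (fun j => c * w j) f = c * weightedNormSq n w f := by
  simp only [weightedNormSq, mul_assoc, mul_sum]

lemma weightedNormSq_smul (w : ℕ → ℝ) (c : ℂ) (f : ℕ → ℂ) :
    weightedNormSq n w (c • f) = ‖c‖ ^ 2 * weightedNormSq n w f := by
  simp only [weightedNormSq, Pi.smul_apply, norm_smul, mul_pow, mul_sum, mul_left_comm]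

lemma weightedInner_eq_of_diagonal {d : ℕ → ℝ} {g : ℕ → ℂ} (hg : ∀ j, g j = d j * x j) :
    weightedInner n w x g = weightedNormSq n (fun j => w j * d j) x := by
  refine sum_congr rfl fun j _ => ?_
  rw [hg, mul_left_comm, Complex.re_ofReal_mul, Complex.conj_mul', ← Complex.ofReal_pow,
    Complex.ofReal_re, mul_assoc]

lemma sum_range_shift {M : Type*} [AddCommMonoid M] {f : ℕ → M} (h0 : f 0 = 0)
    (hn : f (n + 1) = 0) : ∑ j ∈ range (n + 1), f (j + 1) = ∑ j ∈ range (n + 1), f j := by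
  rw [← add_zero (∑ j ∈ range (n + 1), f (j + 1)), ← h0, ← sum_range_succ', sum_range_succ, hn,
    add_zero]

lemma weightedNormSq_shift_le (hw : 0 ≤ w 0) (hx : x (n + 1) = 0) :
    weightedNormSq n (fun j => w (j + 1)) (fun j => x (j + 1)) ≤ weightedNormSq n w x := by
  calc weightedNormSq n (fun j => w (j + 1)) (fun j => x (j + 1))
      ≤ (∑ j ∈ range (n + 1), w (j + 1) * ‖x (j + 1)‖ ^ 2) + w 0 * ‖x 0‖ ^ 2 :=
        le_add_of_nonneg_right (by positivity)
    _ = weightedNormSq n w x := by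
        rw [← sum_range_succ' (fun j => w j * ‖x j‖ ^ 2), sum_range_succ, hx, norm_zero,
          zero_pow two_ne_zero, mul_zero, add_zero, weightedNormSq]

lemma weightedNormSq_ann (w : ℕ → ℝ) (hx : x (n + 1) = 0) :
    weightedNormSq n w (ann x) = weightedNormSq n (fun j => j * w (j - 1)) x := by
  unfold weightedNormSq
  rw [← sum_range_shift (f := fun j => (j : ℝ) * w (j - 1) * ‖x j‖ ^ 2) (by simp) (by simp [hx])]
  refine sum_congr rfl fun j _ => ?_
  rw [norm_ann_sq, Nat.cast_succ, Nat.add_sub_cancel, mul_left_comm, mul_assoc]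

lemma weightedNormSq_cre_le (hw : ∀ j, 0 ≤ w j) (f : ℕ → ℂ) :
    weightedNormSq n w (cre f) ≤ weightedNormSq n (fun j => (j + 1) * w (j + 1)) f := by
  unfold weightedNormSq
  rw [sum_range_succ', cre_zero, norm_zero, zero_pow two_ne_zero, mul_zero, add_zero,
    sum_range_succ]
  refine le_add_of_le_of_nonneg (le_of_eq (sum_congr rfl fun j _ => ?_)) ?_
  · rw [norm_cre_succ_sq, mul_left_comm, mul_assoc]
  · have := hw (n + 1)
    positivity

lemma dissipation_ann (hx : x (n + 1) = 0) :
    dissipation n w ann cre x = weightedNormSq n (fun j => j * (w (j - 1) - w j)) x := by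
  rw [dissipation, weightedNormSq_ann w hx, weightedInner_eq_of_diagonal (cre_ann x),
    ← weightedNormSq_sub]
  congr! 2 with j
  ring

lemma dissipation_cre_le (hw : ∀ j, 0 ≤ w j) :
    dissipation n w cre ann x ≤ weightedNormSq n (fun j => (j + 1) * (w (j + 1) - w j)) x := by
  rw [dissipation, weightedInner_eq_of_diagonal (ann_cre x), sub_le_iff_le_add,
    ← weightedNormSq_add]
  convert weightedNormSq_cre_le hw x using 3 with j
  ring

lemma dissipation_ann_ann (hx : ∀ j, n < j → x j = 0) :
    dissipation n w (ann ∘ ann) (cre ∘ cre) x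
      = weightedNormSq n (fun j => j * (j - 1) * (w (j - 2) - w j)) x := by
  have hann : ann x (n + 1) = 0 := by rw [ann, hx _ (by lia), mul_zero]
  simp only [dissipation, Function.comp_apply]
  rw [weightedNormSq_ann w hann, weightedNormSq_ann _ (hx _ n.lt_succ_self),
    weightedInner_eq_of_diagonal (cre_cre_ann_ann x), ← weightedNormSq_sub]
  congr! 2 with j
  cases j with
  | zero => simp
  | succ j =>
    rw [Nat.add_sub_cancel, Nat.cast_succ, Nat.add_sub_add_right j 1 1]
    ring

lemma dissipation_cre_cre_le (hw : ∀ j, 0 ≤ w j) :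
    dissipation n w (cre ∘ cre) (ann ∘ ann) x
      ≤ weightedNormSq n (fun j => (j + 1) * (j + 2) * (w (j + 2) - w j)) x := by
  simp only [dissipation, Function.comp_apply]
  rw [weightedInner_eq_of_diagonal (ann_ann_cre_cre x), sub_le_iff_le_add, ← weightedNormSq_add]
  have hstep (j : ℕ) : 0 ≤ (j + 1) * w (j + 1) := mul_nonneg (by positivity) (hw _)
  refine (weightedNormSq_cre_le hw _).trans ((weightedNormSq_cre_le hstep x).trans_eq ?_)
  congr! 2 with j
  push_cast
  ring

lemma dissipation_num : dissipation n w num num x = 0 := by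
  have hdiag (j : ℕ) : num (num x) j = ((j ^ 2 : ℝ) : ℂ) * x j := by
    simp only [num]; push_cast; ring
  rw [dissipation, weightedInner_eq_of_diagonal hdiag, sub_eq_zero]
  refine sum_congr rfl fun j _ => ?_
  rw [num, norm_mul, Complex.norm_natCast, mul_pow, mul_assoc]

lemma dissipation_num_num : dissipation n w (num ∘ num) (num ∘ num) x = 0 := by
  have hdiag (j : ℕ) : (num ∘ num) ((num ∘ num) x) j = ((j ^ 4 : ℝ) : ℂ) * x j := by
    simp only [num, Function.comp_apply]; push_cast; ring
  rw [dissipation, weightedInner_eq_of_diagonal hdiag, sub_eq_zero]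
  refine sum_congr rfl fun j _ => ?_
  simp only [num, Function.comp_apply, norm_mul, Complex.norm_natCast]
  ring

lemma weightedInner_cre_sub_ann (hx : x (n + 1) = 0) :
    weightedInner n w x (cre x - ann x)
      = ∑ j ∈ range (n + 1),
          (w (j + 1) - w j) * Real.sqrt (j + 1) * (conj (x (j + 1)) * x j).re := by
  have hcre : ∑ j ∈ range (n + 1), w j * (conj (x j) * cre x j).re
      = ∑ j ∈ range (n + 1), w (j + 1) * Real.sqrt (j + 1) * (conj (x (j + 1)) * x j).re := by
    rw [← sum_range_shift (by simp) (by simp [hx])]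
    refine sum_congr rfl fun j _ => ?_
    rw [cre_succ, mul_left_comm, Complex.re_ofReal_mul, mul_assoc]
  have hann (j : ℕ) : (conj (x j) * ann x j).re
      = Real.sqrt (j + 1) * (conj (x (j + 1)) * x j).re := by
    rw [ann, mul_left_comm, Complex.re_ofReal_mul]
    simp only [Complex.mul_re, Complex.conj_re, Complex.conj_im]
    ring
  simp only [weightedInner, Pi.sub_apply, mul_sub, Complex.sub_re, sum_sub_distrib, hcre, hann,
    sub_mul, mul_assoc]

lemma two_mul_abs_re_conj_mul_le (u v : ℂ) : 2 * |(conj v * u).re| ≤ ‖u‖ ^ 2 + ‖v‖ ^ 2 := by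
  have h : |(conj v * u).re| ≤ ‖v‖ * ‖u‖ := by
    simpa only [norm_mul, Complex.norm_conj] using Complex.abs_re_le_norm (conj v * u)
  linarith [two_mul_le_add_sq ‖v‖ ‖u‖]

lemma two_mul_mul_re_conj_mul_le (b : ℝ) {D A B : ℝ} (hD : 0 ≤ D) (hA : D ≤ A) (hB : D ≤ B)
    (u v : ℂ) : 2 * (b * (D * (conj v * u).re)) ≤ |b| * (A * ‖u‖ ^ 2 + B * ‖v‖ ^ 2) := by
  set r := (conj v * u).re
  calc 2 * (b * (D * r)) = D * (2 * (b * r)) := by ring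
    _ ≤ D * (2 * (|b| * |r|)) := by rw [← abs_mul]; gcongr; exact le_abs_self _
    _ = |b| * (D * (2 * |r|)) := by ring
    _ ≤ |b| * (D * (‖u‖ ^ 2 + ‖v‖ ^ 2)) := by gcongr; exact two_mul_abs_re_conj_mul_le u v
    _ = |b| * (D * ‖u‖ ^ 2 + D * ‖v‖ ^ 2) := by ring
    _ ≤ |b| * (A * ‖u‖ ^ 2 + B * ‖v‖ ^ 2) := by gcongr

lemma re_conj_mul_neg_I_smul_Ham (b1 b2 b3 : ℝ) (x : ℕ → ℂ) (j : ℕ) :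
    (conj (x j) * ((-Complex.I) • Ham b1 b2 b3 x) j).re
      = b1 * (conj (x j) * (cre x - ann x) j).re := by
  have hsplit : conj (x j) * ((-Complex.I) • Ham b1 b2 b3 x) j
      = (b1 : ℂ) * (conj (x j) * (cre x - ann x) j)
        - Complex.I * ((b2 * j + b3 * (j * (j - 1))) * ‖x j‖ ^ 2 : ℝ) := by
    simp only [Ham, num, Pi.add_apply, Pi.smul_apply, smul_eq_mul, cre_cre_ann_ann]
    push_cast
    rw [← Complex.conj_mul']
    linear_combination (-(b1 : ℂ) * (conj (x j) * (cre x - ann x) j)) * Complex.I_sq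
  rw [hsplit, Complex.sub_re, Complex.re_ofReal_mul, Complex.I_mul_re, Complex.ofReal_im, neg_zero,
    sub_zero]

lemma two_mul_weightedInner_Gop (b1 b2 b3 : ℝ) (a1 a2 a3 a4 a5 a6 : ℂ) (w : ℕ → ℝ) (x : ℕ → ℂ) :
    2 * weightedInner n w x (Gop b1 b2 b3 a1 a2 a3 a4 a5 a6 x)
      = 2 * (b1 * weightedInner n w x (cre x - ann x))
        - (‖a1‖ ^ 2 * weightedInner n w x (cre (ann x))
          + ‖a2‖ ^ 2 * weightedInner n w x (ann (cre x))
          + ‖a3‖ ^ 2 * weightedInner n w x (num (num x))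
          + ‖a4‖ ^ 2 * weightedInner n w x (cre (cre (ann (ann x))))
          + ‖a5‖ ^ 2 * weightedInner n w x (ann (ann (cre (cre x))))
          + ‖a6‖ ^ 2 * weightedInner n w x (num (num (num (num x))))) := by
  simp only [weightedInner, mul_sum, ← sum_add_distrib, ← sum_sub_distrib]
  refine sum_congr rfl fun j _ => ?_
  have hhalf : (1 / 2 : ℂ) = ((1 / 2 : ℝ) : ℂ) := by push_cast; rfl
  rw [Gop, Pi.sub_apply, mul_sub, Complex.sub_re, re_conj_mul_neg_I_smul_Ham, hhalf]
  simp only [Pi.add_apply, Pi.smul_apply, smul_eq_mul, mul_add, mul_left_comm (conj (x j)),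
    Complex.add_re, Complex.re_ofReal_mul]
  ring

namespace IsLyapunovWeight

lemma const_nonneg (hw : IsLyapunovWeight K w) : 0 ≤ K := by
  have hgain : 0 ≤ K * (w 0 + 1) := by
    have h := hw.one_photon 0
    have := hw.mono (Nat.zero_le 1)
    norm_num at h
    linarith
  exact nonneg_of_mul_nonneg_left hgain (by linarith [hw.nonneg 0])

lemma sub_mul_sqrt_le (hw : IsLyapunovWeight K w) (j : ℕ) :
    (w (j + 1) - w j) * Real.sqrt (j + 1) ≤ K * (w j + 1) := by
  have hsqrt : Real.sqrt (j + 1) ≤ j + 1 :=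
    Real.sqrt_le_iff.mpr ⟨by positivity, le_self_pow₀ (by simp) two_ne_zero⟩
  calc (w (j + 1) - w j) * Real.sqrt (j + 1)
      ≤ (w (j + 1) - w j) * (j + 1) :=
        mul_le_mul_of_nonneg_left hsqrt (sub_nonneg.mpr (hw.mono j.le_succ))
    _ = (j + 1) * (w (j + 1) - w j) := mul_comm _ _
    _ ≤ K * (w j + 1) := hw.one_photon j

lemma drive_le (hw : IsLyapunovWeight K w) (b : ℝ) (hx : x (n + 1) = 0) :
    2 * (b * weightedInner n w x (cre x - ann x))
      ≤ 2 * |b| * K * weightedNormSq n (fun j => w j + 1) x := by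
  have hterm (j : ℕ) :
      2 * (b * ((w (j + 1) - w j) * Real.sqrt (j + 1) * (conj (x (j + 1)) * x j).re))
        ≤ |b| * K * ((w j + 1) * ‖x j‖ ^ 2 + (w (j + 1) + 1) * ‖x (j + 1)‖ ^ 2) := by
    have hmono : w j ≤ w (j + 1) := hw.mono j.le_succ
    have hD : (w (j + 1) - w j) * Real.sqrt (j + 1) ≤ K * (w j + 1) := hw.sub_mul_sqrt_le j
    have hD' : (w (j + 1) - w j) * Real.sqrt (j + 1) ≤ K * (w (j + 1) + 1) :=
      hD.trans (mul_le_mul_of_nonneg_left (by gcongr) hw.const_nonneg)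
    refine (two_mul_mul_re_conj_mul_le b ?_ hD hD' (x j) (x (j + 1))).trans_eq (by ring)
    exact mul_nonneg (sub_nonneg.mpr hmono) (Real.sqrt_nonneg _)
  calc 2 * (b * weightedInner n w x (cre x - ann x))
      ≤ |b| * K * (weightedNormSq n (fun j => w j + 1) x
          + weightedNormSq n (fun j => w (j + 1) + 1) (fun j => x (j + 1))) := by
        rw [weightedInner_cre_sub_ann hx]
        simp only [weightedNormSq, mul_sum, ← sum_add_distrib]
        exact sum_le_sum fun j _ => hterm j
    _ ≤ |b| * K * (weightedNormSq n (fun j => w j + 1) x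
          + weightedNormSq n (fun j => w j + 1) x) := by
        have := hw.const_nonneg
        gcongr
        exact weightedNormSq_shift_le (w := fun j => w j + 1)
          (by linarith [hw.nonneg 0]) hx
    _ = 2 * |b| * K * weightedNormSq n (fun j => w j + 1) x := by ring

lemma dissipation_ann_nonpos (hw : IsLyapunovWeight K w) (hx : x (n + 1) = 0) :
    dissipation n w ann cre x ≤ 0 := by
  rw [dissipation_ann hx]
  refine sum_nonpos fun j _ => mul_nonpos_of_nonpos_of_nonneg ?_ (sq_nonneg _)
  exact mul_nonpos_of_nonneg_of_nonpos j.cast_nonneg (sub_nonpos.mpr (hw.mono (j.sub_le 1)))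

lemma dissipation_cre_le_const_mul (hw : IsLyapunovWeight K w) :
    dissipation n w cre ann x ≤ K * weightedNormSq n (fun j => w j + 1) x := by
  rw [← weightedNormSq_const_mul]
  exact (dissipation_cre_le hw.nonneg).trans (weightedNormSq_mono hw.one_photon x)

lemma dissipation_ann_ann_nonpos (hw : IsLyapunovWeight K w) (hx : ∀ j, n < j → x j = 0) :
    dissipation n w (ann ∘ ann) (cre ∘ cre) x ≤ 0 := by
  rw [dissipation_ann_ann hx]
  refine sum_nonpos fun j _ => mul_nonpos_of_nonpos_of_nonneg ?_ (sq_nonneg _)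
  have hcoeff : (0 : ℝ) ≤ j * (j - 1) := by
    cases j with
    | zero => simp
    | succ j => push_cast; rw [add_sub_cancel_right]; positivity
  exact mul_nonpos_of_nonneg_of_nonpos hcoeff (sub_nonpos.mpr (hw.mono (j.sub_le 2)))

lemma dissipation_two_photon_le (hw : IsLyapunovWeight K w) {c d : ℝ} (hd : 0 ≤ d) (hdc : d ≤ c)
    (hx : ∀ j, n < j → x j = 0) :
    c * dissipation n w (ann ∘ ann) (cre ∘ cre) x + d * dissipation n w (cre ∘ cre) (ann ∘ ann) x
      ≤ d * K * weightedNormSq n (fun j => w j + 1) x := by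
  have hloss := mul_le_mul_of_nonpos_right hdc (hw.dissipation_ann_ann_nonpos hx)
  have hbalanced : dissipation n w (ann ∘ ann) (cre ∘ cre) x
      + dissipation n w (cre ∘ cre) (ann ∘ ann) x ≤ K * weightedNormSq n (fun j => w j + 1) x := by
    rw [dissipation_ann_ann hx, ← weightedNormSq_const_mul]
    refine (add_le_add_right (dissipation_cre_cre_le hw.nonneg) _).trans ?_
    rw [← weightedNormSq_add]
    exact weightedNormSq_mono hw.two_photon x
  linarith [mul_le_mul_of_nonneg_left hbalanced hd]

theorem lyapunov_le (hw : IsLyapunovWeight K w) (b1 b2 b3 : ℝ) (a1 a2 a3 a4 a5 a6 : ℂ)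
    (ha : ‖a5‖ ≤ ‖a4‖) (hx : ∀ j, n < j → x j = 0) :
    2 * weightedInner n w x (Gop b1 b2 b3 a1 a2 a3 a4 a5 a6 x)
      + (weightedNormSq n w (a1 • ann x) + weightedNormSq n w (a2 • cre x)
        + weightedNormSq n w (a3 • num x) + weightedNormSq n w (a4 • ann (ann x))
        + weightedNormSq n w (a5 • cre (cre x)) + weightedNormSq n w (a6 • num (num x)))
      ≤ (2 * |b1| + ‖a2‖ ^ 2 + ‖a5‖ ^ 2) * K * weightedNormSq n (fun j => w j + 1) x := by
  have hx' : x (n + 1) = 0 := hx _ n.lt_succ_self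
  have hdrive := hw.drive_le b1 hx'
  have hloss := mul_nonpos_of_nonneg_of_nonpos (sq_nonneg ‖a1‖) (hw.dissipation_ann_nonpos hx')
  have hgain := mul_le_mul_of_nonneg_left (hw.dissipation_cre_le_const_mul (n := n) (x := x))
    (sq_nonneg ‖a2‖)
  have htwo := hw.dissipation_two_photon_le (sq_nonneg ‖a5‖)
    (pow_le_pow_left₀ (norm_nonneg _) ha 2) hx
  have hnum : ‖a3‖ ^ 2 * dissipation n w num num x = 0 := by rw [dissipation_num, mul_zero]
  have hnum_num : ‖a6‖ ^ 2 * dissipation n w (num ∘ num) (num ∘ num) x = 0 := by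
    rw [dissipation_num_num, mul_zero]
  rw [two_mul_weightedInner_Gop]
  simp only [weightedNormSq_smul]
  simp only [dissipation, Function.comp_apply] at hloss hgain htwo hnum hnum_num
  linarith

end IsLyapunovWeight

lemma normSq_numPow_proj (p n : ℕ) (f : ℕ → ℂ) :
    normSq (numPow p (proj n f)) = weightedNormSq n (fun j => (j : ℝ) ^ (2 * p)) f := by
  rw [normSq, tsum_eq_sum (s := range (n + 1))]
  · refine sum_congr rfl fun j hj => ?_
    rw [numPow, proj, if_pos (mem_range_succ_iff.mp hj), norm_mul, norm_pow, Complex.norm_natCast,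
      mul_pow, ← pow_mul']
  · intro j hj
    rw [numPow, proj, if_neg (mt mem_range_succ_iff.mpr hj), mul_zero, norm_zero,
      zero_pow two_ne_zero]

lemma re_innerSeq_numPow_proj (p n : ℕ) (f g : ℕ → ℂ) :
    (innerSeq (numPow p f) (numPow p (proj n g))).re
      = weightedInner n (fun j => (j : ℝ) ^ (2 * p)) f g := by
  rw [innerSeq, tsum_eq_sum (s := range (n + 1)), Complex.re_sum]
  · refine sum_congr rfl fun j hj => ?_
    rw [numPow, numPow, proj, if_pos (mem_range_succ_iff.mp hj), ← Complex.re_ofReal_mul]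
    congr 1
    simp only [map_mul, map_pow, Complex.conj_natCast]
    push_cast
    ring
  · intro j hj
    rw [numPow, numPow, proj, if_neg (mt mem_range_succ_iff.mpr hj), mul_zero, mul_zero]

lemma proj_eq_self (hx : ∀ j, n < j → x j = 0) : proj n x = x := by
  funext j
  exact ite_eq_left_iff.mpr fun hj => (hx j (not_le.mp hj)).symm

lemma normSq_numPow_add_normSq (p : ℕ) (hx : ∀ j, n < j → x j = 0) :
    normSq (numPow p x) + normSq x = weightedNormSq n (fun j => (j : ℝ) ^ (2 * p) + 1) x := by
  have hpow := normSq_numPow_proj p n x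
  have hone := normSq_numPow_proj 0 n x
  have hzero : numPow 0 x = x := by funext j; rw [numPow, pow_zero, one_mul]
  simp only [proj_eq_self hx, hzero, mul_zero, pow_zero] at hpow hone
  rw [hpow, hone, weightedNormSq_add]

end Truncated

theorem stmt10_general (p : ℕ) (b1 b2 b3 : ℝ) (a1 a2 a3 a4 a5 a6 : ℂ) (ha : ‖a5‖ ≤ ‖a4‖) :
    ∃ al : ℝ, 0 ≤ al ∧
      ∀ (n : ℕ) (x : ℕ → ℂ), (∀ j, n < j → x j = 0) →
        2 * (innerSeq (numPow p x) (numPow p (proj n (Gop b1 b2 b3 a1 a2 a3 a4 a5 a6 x)))).re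
          + (normSq (numPow p (proj n (a1 • ann x)))
            + normSq (numPow p (proj n (a2 • cre x)))
            + normSq (numPow p (proj n (a3 • num x)))
            + normSq (numPow p (proj n (a4 • ann (ann x))))
            + normSq (numPow p (proj n (a5 • cre (cre x))))
            + normSq (numPow p (proj n (a6 • num (num x)))))
          ≤ al * (normSq (numPow p x) + normSq x) := by
  obtain ⟨K, hw⟩ := exists_isLyapunovWeight_pow (2 * p)
  refine ⟨(2 * |b1| + ‖a2‖ ^ 2 + ‖a5‖ ^ 2) * K,
    mul_nonneg (by positivity) hw.const_nonneg, fun n x hx => ?_⟩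
  simp only [re_innerSeq_numPow_proj, normSq_numPow_proj, normSq_numPow_add_normSq p hx]
  exact hw.lyapunov_le b1 b2 b3 a1 a2 a3 a4 a5 a6 ha hx

/-- condition (H1.3) for `C = N^p` in the proof of Theorem 7. For
`p ≥ 4` and `|α₄| ≥ |α₅|` there are constants `α, β ≥ 0` with
`2 Re⟨N^p x, N^p Pₙ G x⟩ + Σ_{k=1}^{6} ‖N^p Pₙ L_k x‖² ≤ α(‖N^p x‖² + ‖x‖²) + β`
for all `n` and all `x ∈ h_n`. -/
theorem stmt10 (p : ℕ) (hp : 4 ≤ p) (b1 b2 b3 : ℝ) (a1 a2 a3 a4 a5 a6 : ℂ)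
    (ha : ‖a5‖ ≤ ‖a4‖) :
    ∃ al be : ℝ, 0 ≤ al ∧ 0 ≤ be ∧
      ∀ (n : ℕ) (x : ℕ → ℂ), (∀ j, n < j → x j = 0) →
        2 * (innerSeq (numPow p x) (numPow p (proj n (Gop b1 b2 b3 a1 a2 a3 a4 a5 a6 x)))).re
          + (normSq (numPow p (proj n (a1 • ann x)))
            + normSq (numPow p (proj n (a2 • cre x)))
            + normSq (numPow p (proj n (a3 • num x)))
            + normSq (numPow p (proj n (a4 • ann (ann x))))
            + normSq (numPow p (proj n (a5 • cre (cre x))))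
            + normSq (numPow p (proj n (a6 • num (num x)))))
          ≤ al * (normSq (numPow p x) + normSq x) + be := by
  obtain ⟨al, hal, h⟩ := stmt10_general p b1 b2 b3 a1 a2 a3 a4 a5 a6 ha
  exact ⟨al, 0, hal, le_rfl, fun n x hx => (h n x hx).trans_eq (add_zero _).symm⟩

end QOsc
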